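/- Let K ≥ 1 and let a_0, ..., a_K be real random variables (on some probability space) that are independent and whose joint distribution is palindromic, i.e., the random vector (a_0, ..., a_K) has the same distribution as the reversed vector (a_K, ..., a_0). Let C_a(x) = ∑_{k=0}^{K} a_k cos(kx), and suppose the event E = {(a_0,...,a_K) ≠ 0} has positive probability. Then the conditional expectation of Z(C_a) given E is at least K; equivalently, E[Z(C_a)·1_E] ≥ K · P(E). -/

import Mathlib

/-!
On the unit circle, `C_a(x) = Re p(e^{ix})` for `p(z) = ∑ a_k z^k`. Factor `p` into linear terms: as
`x` runs over a period, the phase of `e^{ix} - z` grows by `2π` if `‖z‖ < 1`, by `π` if `‖z‖ = 1`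
(the factor then crosses zero once) and by `0` if `‖z‖ > 1`. If `π N(a)` is the total growth,
the intermediate value theorem yields `N(a)` distinct zeros of `C_a`. Reversing the coefficients
sends every root `z` to `1 / z`, so `N(a) + N(rev a) = 2K`. Palindromicity makes `N(a)` and
`N(rev a)` equidistributed, hence `N(a)` has mean `K` on the event `a ≠ 0`.

Measurability of `N` comes from Jensen's formula: the logarithmic Mahler measure of `p(e^t z)` is
`log |lead p| + ∑ log max(e^t, ‖root‖)`, whose symmetric difference between `t` and `-t` equals
`t N` for small `t > 0`, and Mahler measures are integrals depending measurably on `a`.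
-/

open Real Set
open scoped ENNReal

/-- The multiplicity of a zero `x` of `f`: the least `n ≥ 1` such that the
`n`-th derivative of `f` at `x` is nonzero. -/
noncomputable def zeroMult (f : ℝ → ℝ) (x : ℝ) : ℕ :=
  sInf {n : ℕ | 1 ≤ n ∧ iteratedDeriv n f x ≠ 0}

/-- The number of zeros of `f` in one period `[0, 2π)`, counted with multiplicity. -/
noncomputable def Zcount (f : ℝ → ℝ) : ℝ≥0∞ :=
  ∑' x : {x : ℝ // x ∈ Set.Ico (0 : ℝ) (2 * Real.pi) ∧ f x = 0},
    (zeroMult f x.1 : ℝ≥0∞)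

open MeasureTheory ProbabilityTheory

open Filter Topology Polynomial

theorem one_le_zeroMult {f : ℝ → ℝ} {x : ℝ} (hf : AnalyticAt ℝ f x)
    (hord : analyticOrderAt f x ≠ ⊤) (hx : f x = 0) : 1 ≤ zeroMult f x := by
  suffices h : ∃ n, 1 ≤ n ∧ iteratedDeriv n f x ≠ 0 from (Nat.sInf_mem h).1
  by_contra! hderiv
  refine hord (ENat.eq_top_iff_forall_ge.2 fun m ↦
    (natCast_le_analyticOrderAt_iff_iteratedDeriv_eq_zero hf).2 fun i _ ↦ ?_)
  rcases Nat.eq_zero_or_pos i with rfl | hi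
  · simpa using hx
  · exact hderiv i hi

theorem encard_zeros_le_Zcount {f : ℝ → ℝ} (hf : ∀ x, AnalyticAt ℝ f x) (hne : f ≠ 0) :
    ({x | x ∈ Ico 0 (2 * π) ∧ f x = 0}.encard : ℝ≥0∞) ≤ Zcount f := by
  rw [← ENNReal.tsum_set_one]
  refine ENNReal.tsum_le_tsum fun x ↦ ?_
  have hord : analyticOrderAt f x ≠ ⊤ := by
    rwa [Ne, AnalyticOnNhd.analyticOrderAt_eq_top_iff_eq_zero _ hf]
  exact_mod_cast one_le_zeroMult (hf x) hord x.2.2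

theorem le_encard_cos_zeros {φ : ℝ → ℝ} {a b : ℝ} (hab : a ≤ b) (hφ : ContinuousOn φ (Icc a b))
    {M : ℕ} (hM : φ b = φ a + π * M) : (M : ℕ∞) ≤ {x ∈ Ico a b | cos (φ x) = 0}.encard := by
  set m : ℤ := ⌈(φ a - π / 2) / π⌉
  have hm_ge : φ a ≤ π / 2 + m * π := by
    linarith [(div_le_iff₀ pi_pos).1 (Int.le_ceil ((φ a - π / 2) / π))]
  have hm_lt : π / 2 + m * π < φ a + π := by
    have := (lt_div_iff₀ pi_pos).1 (sub_lt_iff_lt_add.2 (Int.ceil_lt_add_one ((φ a - π / 2) / π)))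
    linarith
  have hroot (j : Fin M) : ∃ x ∈ Ico a b, φ x = π / 2 + (m + (j : ℕ)) * π := by
    have hj : (j : ℝ) + 1 ≤ M := by exact_mod_cast j.2
    refine intermediate_value_Ico hab hφ ⟨?_, ?_⟩
    · nlinarith [pi_pos, Nat.cast_nonneg (α := ℝ) (j : ℕ)]
    · nlinarith [pi_pos]
  choose x hx hφx using hroot
  have hinj : Function.Injective x := fun i j hij ↦ by
    have h := (hφx i).symm.trans (hij ▸ hφx j)
    simpa [pi_ne_zero, Fin.val_inj] using h
  have hzero : MapsTo x univ {x ∈ Ico a b | cos (φ x) = 0} := fun j _ ↦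
    ⟨hx j, cos_eq_zero_iff.2 ⟨m + (j : ℕ), by rw [hφx]; push_cast; ring⟩⟩
  simpa using encard_le_encard_of_injOn hzero hinj.injOn

/-- A function `F` on the circle, seen over one period, factors as a real function `R` times
`e^{iφ}` with a continuous phase `φ` that grows by `t`. The factor `R` may vanish and change sign,
which lets `φ` pass continuously through the zeros of `F`. -/
def HasPhaseIncrement (F : ℝ → ℂ) (t : ℝ) : Prop :=
  ∃ R φ : ℝ → ℝ, Continuous φ ∧ φ (2 * π) = φ 0 + t ∧
    ∀ x, F x = R x * Complex.exp (φ x * Complex.I)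

namespace HasPhaseIncrement

theorem const (c : ℂ) : HasPhaseIncrement (fun _ ↦ c) 0 :=
  ⟨fun _ ↦ ‖c‖, fun _ ↦ c.arg, continuous_const, by simp,
    fun _ ↦ (Complex.norm_mul_exp_arg_mul_I c).symm⟩

theorem mul {F G : ℝ → ℂ} {s t : ℝ} (hF : HasPhaseIncrement F s) (hG : HasPhaseIncrement G t) :
    HasPhaseIncrement (fun x ↦ F x * G x) (s + t) := by
  obtain ⟨R, φ, hφ, hφ_incr, hF⟩ := hF
  obtain ⟨S, ψ, hψ, hψ_incr, hG⟩ := hG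
  refine ⟨fun x ↦ R x * S x, fun x ↦ φ x + ψ x, hφ.add hψ,
    by simp only [hφ_incr, hψ_incr]; ring, fun x ↦ ?_⟩
  simp only [hF, hG]
  push_cast
  rw [add_mul, Complex.exp_add]
  ring

theorem exp_mul_I : HasPhaseIncrement (fun x ↦ Complex.exp (x * Complex.I)) (2 * π) :=
  ⟨fun _ ↦ 1, id, continuous_id, by simp, fun x ↦ by simp⟩

theorem of_mem_slitPlane {F : ℝ → ℂ} (hF : Continuous F) (hslit : ∀ x, F x ∈ Complex.slitPlane)
    (hper : F (2 * π) = F 0) : HasPhaseIncrement F 0 :=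
  ⟨fun x ↦ ‖F x‖, fun x ↦ (F x).arg,
    continuous_iff_continuousAt.2 fun x ↦ (Complex.continuousAt_arg (hslit x)).comp hF.continuousAt,
    by simp [hper], fun x ↦ (Complex.norm_mul_exp_arg_mul_I _).symm⟩

theorem one_sub_of_norm_lt_one {w : ℝ → ℂ} (hw : Continuous w) (hnorm : ∀ x, ‖w x‖ < 1)
    (hper : w (2 * π) = w 0) : HasPhaseIncrement (fun x ↦ 1 - w x) 0 := by
  refine of_mem_slitPlane (by fun_prop) (fun x ↦ ?_) (by rw [hper])
  simpa [sub_eq_add_neg] using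
    Complex.mem_slitPlane_of_norm_lt_one (z := -w x) (by simpa using hnorm x)

theorem exp_mul_I_sub_of_norm_lt_one {z : ℂ} (hz : ‖z‖ < 1) :
    HasPhaseIncrement (fun x ↦ Complex.exp (x * Complex.I) - z) (2 * π) := by
  have h := exp_mul_I.mul <| one_sub_of_norm_lt_one
    (w := fun x ↦ z * Complex.exp ((-x : ℝ) * Complex.I)) (by fun_prop)
    (fun x ↦ by rwa [norm_mul, Complex.norm_exp_ofReal_mul_I, mul_one])
    (by simp [Complex.exp_neg])
  convert h using 1
  · funext x
    rw [mul_sub, mul_left_comm, ← Complex.exp_add]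
    simp
  · ring

theorem exp_mul_I_sub_of_one_lt_norm {z : ℂ} (hz : 1 < ‖z‖) :
    HasPhaseIncrement (fun x ↦ Complex.exp (x * Complex.I) - z) 0 := by
  have hz0 : z ≠ 0 := norm_pos_iff.1 (one_pos.trans hz)
  have h := (const (-z)).mul <| one_sub_of_norm_lt_one
    (w := fun x ↦ z⁻¹ * Complex.exp (x * Complex.I)) (by fun_prop)
    (fun x ↦ by
      rw [norm_mul, Complex.norm_exp_ofReal_mul_I, mul_one, norm_inv]
      exact inv_lt_one_of_one_lt₀ hz)
    (by simp)
  convert h using 1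
  · funext x
    field_simp
    ring
  · ring

theorem exp_mul_I_sub_of_norm_eq_one {z : ℂ} (hz : ‖z‖ = 1) :
    HasPhaseIncrement (fun x ↦ Complex.exp (x * Complex.I) - z) π := by
  obtain ⟨t, rfl⟩ := Complex.norm_eq_one_iff _ |>.1 hz
  refine ⟨fun x ↦ 2 * sin ((x - t) / 2), fun x ↦ (x + t) / 2 + π / 2, by fun_prop, by ring,
    fun x ↦ ?_⟩
  have hx : Complex.exp (x * Complex.I) =
      Complex.exp ((x - t) / 2 * Complex.I) * Complex.exp ((x + t) / 2 * Complex.I) := by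
    rw [← Complex.exp_add]; ring_nf
  have ht : Complex.exp (t * Complex.I) =
      Complex.exp (-((x - t) / 2) * Complex.I) * Complex.exp ((x + t) / 2 * Complex.I) := by
    rw [← Complex.exp_add]; ring_nf
  push_cast
  rw [Complex.sin, add_mul ((x + t) / 2 : ℂ), Complex.exp_add ((x + t) / 2 * Complex.I),
    Complex.exp_pi_div_two_mul_I, hx, ht]
  linear_combination (Complex.exp ((x - t) / 2 * Complex.I)
    - Complex.exp (-((x - t) / 2) * Complex.I)) * Complex.exp ((x + t) / 2 * Complex.I)
    * Complex.I_sq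

theorem le_encard_re_zeros {F : ℝ → ℂ} {M : ℕ} (hF : HasPhaseIncrement F (π * M)) :
    (M : ℕ∞) ≤ {x | x ∈ Ico 0 (2 * π) ∧ (F x).re = 0}.encard := by
  obtain ⟨R, φ, hφ, hφ_incr, hF⟩ := hF
  refine (le_encard_cos_zeros two_pi_pos.le hφ.continuousOn hφ_incr).trans (encard_le_encard ?_)
  rintro x ⟨hx, hcos⟩
  exact ⟨hx, by rw [hF, Complex.re_ofReal_mul, Complex.exp_ofReal_mul_I_re, hcos, mul_zero]⟩

end HasPhaseIncrement

@[elab_as_elim]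
theorem polynomial_induction_of_isAlgClosed {k : Type*} [Field k] [IsAlgClosed k] {P : k[X] → Prop}
    (const : ∀ c ≠ 0, P (C c)) (linear : ∀ z, P (X + C z))
    (mul : ∀ p q, p ≠ 0 → q ≠ 0 → P p → P q → P (p * q)) (p : k[X]) (hp : p ≠ 0) : P p := by
  induction IsAlgClosed.splits p using Submonoid.closure_induction with
  | mem q hq =>
    rcases hq with ⟨c, rfl⟩ | ⟨z, rfl⟩
    · exact const c (by simpa using hp)
    · exact linear z
  | one => simpa using const 1 one_ne_zero
  | mul q r _ _ ihq ihr =>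
    obtain ⟨hq, hr⟩ := mul_ne_zero_iff.1 hp
    exact mul q r hq hr (ihq hq) (ihr hr)

/-- The phase increment of `e^{ix} - z` over a period, in units of `π`: a root inside the unit disk
counts twice, a root on its boundary once. -/
noncomputable def diskWeight (z : ℂ) : ℕ := if ‖z‖ < 1 then 2 else if ‖z‖ = 1 then 1 else 0

theorem diskWeight_of_norm_lt_one {z : ℂ} (hz : ‖z‖ < 1) : diskWeight z = 2 := if_pos hz

theorem diskWeight_of_norm_eq_one {z : ℂ} (hz : ‖z‖ = 1) : diskWeight z = 1 := by
  simp [diskWeight, hz]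

theorem diskWeight_of_one_lt_norm {z : ℂ} (hz : 1 < ‖z‖) : diskWeight z = 0 := by
  simp [diskWeight, hz.not_gt, hz.ne']

theorem diskWeight_add_diskWeight_inv {z : ℂ} (hz : z ≠ 0) :
    diskWeight z + diskWeight z⁻¹ = 2 := by
  rcases lt_trichotomy ‖z‖ 1 with h | h | h
  · rw [diskWeight_of_norm_lt_one h, diskWeight_of_one_lt_norm]
    simpa using (one_lt_inv₀ (norm_pos_iff.2 hz)).2 h
  · rw [diskWeight_of_norm_eq_one h, diskWeight_of_norm_eq_one (by simp [h])]
  · rw [diskWeight_of_one_lt_norm h, diskWeight_of_norm_lt_one]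
    simpa using inv_lt_one_of_one_lt₀ h

/-- Twice the number of roots in the open unit disk plus the number of roots on the unit circle,
with multiplicity; it is `0` for the zero polynomial. -/
noncomputable def weightedRootCount (p : ℂ[X]) : ℕ := (p.roots.map diskWeight).sum

@[simp]
theorem weightedRootCount_zero : weightedRootCount 0 = 0 := by simp [weightedRootCount]

@[simp]
theorem weightedRootCount_C (c : ℂ) : weightedRootCount (C c) = 0 := by simp [weightedRootCount]

@[simp]
theorem weightedRootCount_X_add_C (z : ℂ) : weightedRootCount (X + C z) = diskWeight (-z) := by
  simp [weightedRootCount]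

@[simp]
theorem weightedRootCount_X_pow (n : ℕ) : weightedRootCount (X ^ n) = 2 * n := by
  simp [weightedRootCount, diskWeight, mul_comm, Multiset.map_nsmul, Multiset.sum_nsmul]

theorem weightedRootCount_mul {p q : ℂ[X]} (hp : p ≠ 0) (hq : q ≠ 0) :
    weightedRootCount (p * q) = weightedRootCount p + weightedRootCount q := by
  simp [weightedRootCount, roots_mul (mul_ne_zero hp hq)]

theorem weightedRootCount_X_add_C_add_reverse (z : ℂ) :
    weightedRootCount (X + C z) + weightedRootCount (X + C z).reverse = 2 := by
  have hrev : (X + C z).reverse = C z * X + C 1 := by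
    simp [reverse, reflect_C, add_comm]
  rw [weightedRootCount_X_add_C, hrev]
  rcases eq_or_ne z 0 with rfl | hz
  · simp [weightedRootCount, diskWeight]
  · rw [weightedRootCount, roots_C_mul_X_add_C _ hz]
    simpa [inv_neg] using diskWeight_add_diskWeight_inv (neg_ne_zero.2 hz)

theorem weightedRootCount_add_reverse {p : ℂ[X]} (hp : p ≠ 0) :
    weightedRootCount p + weightedRootCount p.reverse = 2 * p.natDegree := by
  refine polynomial_induction_of_isAlgClosed (fun c _ ↦ by simp)
    (fun z ↦ by rw [weightedRootCount_X_add_C_add_reverse, natDegree_X_add_C])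
    (fun p q hp hq ihp ihq ↦ ?_) p hp
  rw [reverse_mul_of_domain, weightedRootCount_mul hp hq,
    weightedRootCount_mul (by simpa using hp) (by simpa using hq), natDegree_mul hp hq]
  linarith

theorem weightedRootCount_add_reflect {p : ℂ[X]} (hp : p ≠ 0) {K : ℕ} (hK : p.natDegree ≤ K) :
    weightedRootCount p + weightedRootCount (p.reflect K) = 2 * K := by
  have hreflect : p.reflect K = p.reverse * X ^ (K - p.natDegree) := by
    have h := reflect_mul p 1 le_rfl (G := K - p.natDegree) (by simp)
    rwa [mul_one, Nat.add_sub_cancel' hK, reflect_one] at h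
  rw [hreflect, weightedRootCount_mul (by simpa using hp) (by simp), weightedRootCount_X_pow,
    ← add_assoc, weightedRootCount_add_reverse hp]
  lia

theorem hasPhaseIncrement_exp_mul_I_sub (z : ℂ) :
    HasPhaseIncrement (fun x ↦ Complex.exp (x * Complex.I) - z) (π * diskWeight z) := by
  rcases lt_trichotomy ‖z‖ 1 with h | h | h
  · simpa [diskWeight_of_norm_lt_one h, mul_comm] using
      HasPhaseIncrement.exp_mul_I_sub_of_norm_lt_one h
  · simpa [diskWeight_of_norm_eq_one h] using HasPhaseIncrement.exp_mul_I_sub_of_norm_eq_one h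
  · simpa [diskWeight_of_one_lt_norm h] using HasPhaseIncrement.exp_mul_I_sub_of_one_lt_norm h

theorem hasPhaseIncrement_eval_exp_mul_I (p : ℂ[X]) :
    HasPhaseIncrement (fun x ↦ p.eval (Complex.exp (x * Complex.I)))
      (π * weightedRootCount p) := by
  rcases eq_or_ne p 0 with rfl | hp
  · simpa using HasPhaseIncrement.const 0
  refine polynomial_induction_of_isAlgClosed (fun c _ ↦ ?_) (fun z ↦ ?_)
    (fun p q hp hq ihp ihq ↦ ?_) p hp
  · simpa using HasPhaseIncrement.const c
  · simpa using hasPhaseIncrement_exp_mul_I_sub (-z)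
  · simpa [weightedRootCount_mul hp hq, mul_add] using ihp.mul ihq

theorem analyticAt_re_eval_exp_mul_I (p : ℂ[X]) (x : ℝ) :
    AnalyticAt ℝ (fun x : ℝ ↦ (p.eval (Complex.exp (x * Complex.I))).re) x := by
  have hexp : AnalyticAt ℂ (fun z ↦ Complex.exp (z * Complex.I)) x := by fun_prop
  have heval := hexp.aeval_polynomial p
  simp only [coe_aeval_eq_eval] at heval
  exact heval.re_ofReal

theorem weightedRootCount_le_Zcount {p : ℂ[X]}
    (hne : (fun x : ℝ ↦ (p.eval (Complex.exp (x * Complex.I))).re) ≠ 0) :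
    (weightedRootCount p : ℝ≥0∞) ≤
      Zcount fun x ↦ (p.eval (Complex.exp (x * Complex.I))).re := by
  refine le_trans ?_ (encard_zeros_le_Zcount (analyticAt_re_eval_exp_mul_I p) hne)
  exact_mod_cast (hasPhaseIncrement_eval_exp_mul_I p).le_encard_re_zeros

theorem logMahlerMeasure_comp_C_mul_X {p : ℂ[X]} (hp : p ≠ 0) {r : ℝ} (hr : 0 < r) :
    (p.comp (C (r : ℂ) * X)).logMahlerMeasure =
      log ‖p.leadingCoeff‖ + (p.roots.map fun z ↦ log (max r ‖z‖)).sum := by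
  have hr0 : (r : ℂ) ≠ 0 := by exact_mod_cast hr.ne'
  refine polynomial_induction_of_isAlgClosed (fun c _ ↦ by simp) (fun z ↦ ?_)
    (fun p q hp hq ihp ihq ↦ ?_) p hp
  · simp [logMahlerMeasure_eq_log_MahlerMeasure, mahlerMeasure_C_mul_X_add_C hr0, abs_of_pos hr]
  · have hcomp {p : ℂ[X]} (hp : p ≠ 0) : p.comp (C (r : ℂ) * X) ≠ 0 := by
      rwa [Ne, comp_C_mul_X_eq_zero_iff (mem_nonZeroDivisors_of_ne_zero hr0)]
    rw [mul_comp, logMahlerMeasure_mul_eq_add_logMahlerMeasure (mul_ne_zero (hcomp hp) (hcomp hq)),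
      ihp, ihq, leadingCoeff_mul, norm_mul,
      log_mul (by simpa using hp) (by simpa using hq), roots_mul (mul_ne_zero hp hq),
      Multiset.map_add, Multiset.sum_add]
    ring

theorem eventually_log_max_exp_sub_log_max_exp_neg (z : ℂ) :
    ∀ᶠ t in 𝓝[>] (0 : ℝ),
      log (max (exp t) ‖z‖) - log (max (exp (-t)) ‖z‖) = t * diskWeight z := by
  have hexp : Tendsto exp (𝓝[>] 0) (𝓝 1) :=
    (continuous_exp.tendsto' 0 1 exp_zero).mono_left nhdsWithin_le_nhds
  have hexp_neg : Tendsto (fun t ↦ exp (-t)) (𝓝[>] 0) (𝓝 1) :=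
    (Continuous.tendsto' (by fun_prop) 0 1 (by simp)).mono_left nhdsWithin_le_nhds
  rcases lt_trichotomy ‖z‖ 1 with h | h | h
  · filter_upwards [hexp.eventually_const_lt h, hexp_neg.eventually_const_lt h] with t ht ht'
    rw [max_eq_left ht.le, max_eq_left ht'.le, log_exp, log_exp, diskWeight_of_norm_lt_one h]
    push_cast
    ring
  · filter_upwards [self_mem_nhdsWithin] with t (ht : 0 < t)
    rw [h, max_eq_left (one_le_exp ht.le), max_eq_right (exp_le_one_iff.2 (by linarith)),
      log_exp, log_one, diskWeight_of_norm_eq_one h]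
    simp
  · filter_upwards [hexp.eventually_lt_const h, hexp_neg.eventually_lt_const h] with t ht ht'
    rw [max_eq_right ht.le, max_eq_right ht'.le, diskWeight_of_one_lt_norm h]
    simp

theorem eventually_logMahlerMeasure_sub_logMahlerMeasure (p : ℂ[X]) :
    ∀ᶠ t in 𝓝[>] (0 : ℝ), (p.comp (C ((exp t : ℝ) : ℂ) * X)).logMahlerMeasure
      - (p.comp (C ((exp (-t) : ℝ) : ℂ) * X)).logMahlerMeasure = t * weightedRootCount p := by
  rcases eq_or_ne p 0 with rfl | hp
  · simp
  have hroots := (eventually_all_finset p.roots.toFinset).2 fun z _ ↦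
    eventually_log_max_exp_sub_log_max_exp_neg z
  filter_upwards [hroots] with t ht
  rw [logMahlerMeasure_comp_C_mul_X hp (exp_pos _), logMahlerMeasure_comp_C_mul_X hp (exp_pos _),
    add_sub_add_left_eq_sub, ← Multiset.sum_map_sub,
    Multiset.map_congr rfl fun z hz ↦ ht z (Multiset.mem_toFinset.2 hz), Multiset.sum_map_mul_left]
  simp [weightedRootCount, Nat.cast_multiset_sum, Multiset.map_map]

theorem eval_ofFn {R : Type*} [Semiring R] [DecidableEq R] {n : ℕ} (v : Fin n → R) (x : R) :
    (ofFn n v).eval x = ∑ k, v k * x ^ (k : ℕ) := by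
  simp [ofFn_eq_sum_monomial, eval_finsetSum]

theorem ofFn_comp_C_mul_X {R : Type*} [CommSemiring R] [DecidableEq R] {n : ℕ} (v : Fin n → R)
    (r : R) : (ofFn n v).comp (C r * X) = ofFn n fun k ↦ v k * r ^ (k : ℕ) := by
  ext i
  rcases lt_or_ge i n with hi | hi <;> simp [hi]

theorem ofFn_rev {R : Type*} [Semiring R] [DecidableEq R] {K : ℕ} (v : Fin (K + 1) → R) :
    (ofFn (K + 1) fun k ↦ v k.rev) = (ofFn (K + 1) v).reflect K := by
  ext i
  rw [coeff_reflect]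
  rcases Nat.lt_or_ge K i with hi | hi
  · simp [revAt_eq_self_of_lt hi, Nat.succ_le_iff.2 hi]
  · rw [revAt_le hi, ofFn_coeff_eq_val_of_lt _ (by lia), ofFn_coeff_eq_val_of_lt _ (by lia)]
    congr 1
    ext
    simp

theorem measurable_logMahlerMeasure_ofFn (n : ℕ) :
    Measurable fun v : Fin n → ℂ ↦ (ofFn n v).logMahlerMeasure := by
  simp only [logMahlerMeasure_def, circleAverage, eval_ofFn, smul_eq_mul,
    intervalIntegral.integral_of_le two_pi_pos.le]
  refine (StronglyMeasurable.integral_prod_right' (f := fun q : (Fin n → ℂ) × ℝ ↦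
    log ‖∑ k, q.1 k * circleMap 0 1 q.2 ^ (k : ℕ)‖) ?_).measurable.const_mul _
  exact Measurable.stronglyMeasurable (by fun_prop)

theorem measurable_weightedRootCount_ofFn (n : ℕ) :
    Measurable fun v : Fin n → ℂ ↦ weightedRootCount (ofFn n v) := by
  rw [← Nat.isClosedEmbedding_coe_real.measurableEmbedding.measurable_comp_iff]
  have hscaled (r : ℝ) :
      Measurable fun v : Fin n → ℂ ↦ ((ofFn n v).comp (C (r : ℂ) * X)).logMahlerMeasure := by
    simp only [ofFn_comp_C_mul_X]
    exact (measurable_logMahlerMeasure_ofFn n).comp (by fun_prop)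
  refine measurable_of_tendsto_metrizable' (𝓝[>] (0 : ℝ))
    (fun t ↦ ((hscaled (exp t)).sub (hscaled (exp (-t)))).const_mul t⁻¹)
    (tendsto_pi_nhds.2 fun v ↦ tendsto_const_nhds.congr' ?_)
  filter_upwards [eventually_logMahlerMeasure_sub_logMahlerMeasure (ofFn n v),
    self_mem_nhdsWithin] with t ht (hpos : 0 < t)
  simp only [Pi.sub_apply, Function.comp_apply] at ht ⊢
  rw [ht, inv_mul_cancel_left₀ hpos.ne']

theorem eq_zero_of_forall_sum_mul_cos_eq_zero {n : ℕ} {v : Fin n → ℝ}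
    (hv : ∀ x, ∑ k, v k * cos ((k : ℕ) * x) = 0) : v = 0 := by
  have hT : LinearIndependent ℝ fun k : Fin n ↦ Chebyshev.T ℝ ((k : ℕ) : ℤ) :=
    (Chebyshev.chebyshevTsequence ℝ).linearIndependent.comp _ Fin.val_injective
  refine funext (Fintype.linearIndependent_iff.1 hT v (eq_zero_of_infinite_isRoot _ ?_))
  refine (Icc_infinite (show (-1 : ℝ) < 1 by norm_num)).mono fun y hy ↦ ?_
  have h := hv (arccos y)
  rw [← cos_arccos hy.1 hy.2]
  simpa [IsRoot.def, eval_finsetSum] using h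

/-- The polynomial `∑ v_k z ^ k`, whose real part on the unit circle is the cosine polynomial
`∑ v_k cos (k x)`. -/
noncomputable def coeffPoly {n : ℕ} (v : Fin n → ℝ) : ℂ[X] := ofFn n fun k ↦ (v k : ℂ)

theorem re_eval_coeffPoly {n : ℕ} (v : Fin n → ℝ) (x : ℝ) :
    ((coeffPoly v).eval (Complex.exp (x * Complex.I))).re = ∑ k, v k * cos ((k : ℕ) * x) := by
  rw [coeffPoly, eval_ofFn, Complex.re_sum]
  refine Finset.sum_congr rfl fun k _ ↦ ?_
  rw [Complex.re_ofReal_mul, ← Complex.exp_nat_mul, ← Complex.exp_ofReal_mul_I_re]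
  push_cast
  rw [mul_assoc]

theorem weightedRootCount_coeffPoly_le_Zcount {n : ℕ} {v : Fin n → ℝ} (hv : v ≠ 0) :
    (weightedRootCount (coeffPoly v) : ℝ≥0∞) ≤ Zcount fun x ↦ ∑ k, v k * cos ((k : ℕ) * x) := by
  simp only [← re_eval_coeffPoly]
  refine weightedRootCount_le_Zcount fun h ↦ hv (eq_zero_of_forall_sum_mul_cos_eq_zero fun x ↦ ?_)
  rw [← re_eval_coeffPoly]
  exact congrFun h x

theorem weightedRootCount_coeffPoly_add_rev {K : ℕ} {v : Fin (K + 1) → ℝ} (hv : v ≠ 0) :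
    weightedRootCount (coeffPoly v) + weightedRootCount (coeffPoly fun k ↦ v k.rev) = 2 * K := by
  have hp : coeffPoly v ≠ 0 := fun h ↦
    hv (funext fun k ↦ by simpa using congrFun (injective_ofFn _ (h.trans (ofFn_zero _).symm)) k)
  have hrev : (coeffPoly fun k ↦ v k.rev) = (coeffPoly v).reflect K := ofFn_rev fun k ↦ (v k : ℂ)
  rw [hrev]
  exact weightedRootCount_add_reflect hp (Nat.lt_succ_iff.1 (ofFn_natDegree_lt (by lia) _))

theorem measurable_weightedRootCount_coeffPoly (n : ℕ) :
    Measurable fun v : Fin n → ℝ ↦ (weightedRootCount (coeffPoly v) : ℝ≥0∞) :=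
  (measurable_of_countable _).comp <| (measurable_weightedRootCount_ofFn n).comp <| by fun_prop

theorem lintegral_weightedRootCount_coeffPoly {Ω : Type*} [MeasurableSpace Ω] {μ : Measure Ω}
    {K : ℕ} {A : Ω → Fin (K + 1) → ℝ} (hpal : IdentDistrib A (fun ω k ↦ A ω k.rev) μ μ) :
    ∫⁻ ω, weightedRootCount (coeffPoly (A ω)) ∂μ = K * μ {ω | A ω ≠ 0} := by
  have hN := measurable_weightedRootCount_coeffPoly (K + 1)
  have hE : NullMeasurableSet {ω | A ω ≠ 0} μ :=
    hpal.aemeasurable_fst.nullMeasurable (measurableSet_singleton 0).compl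
  have hNA : AEMeasurable (fun ω ↦ (weightedRootCount (coeffPoly (A ω)) : ℝ≥0∞)) μ :=
    hN.comp_aemeasurable hpal.aemeasurable_fst
  have hpointwise (ω : Ω) : (weightedRootCount (coeffPoly (A ω)) : ℝ≥0∞)
      + weightedRootCount (coeffPoly fun k ↦ A ω k.rev) =
        {ω | A ω ≠ 0}.indicator (fun _ ↦ 2 * (K : ℝ≥0∞)) ω := by
    by_cases hω : A ω = 0
    · simp [hω, coeffPoly, ← Pi.zero_def]
    · rw [indicator_of_mem (by exact hω)]
      exact_mod_cast weightedRootCount_coeffPoly_add_rev hω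
  have htwice : 2 * ∫⁻ ω, weightedRootCount (coeffPoly (A ω)) ∂μ = 2 * (K * μ {ω | A ω ≠ 0}) :=
    calc 2 * ∫⁻ ω, weightedRootCount (coeffPoly (A ω)) ∂μ
      _ = ∫⁻ ω, weightedRootCount (coeffPoly (A ω)) ∂μ
          + ∫⁻ ω, weightedRootCount (coeffPoly fun k ↦ A ω k.rev) ∂μ := by
        rw [two_mul]
        congr 1
        exact (hpal.comp hN).lintegral_eq
      _ = ∫⁻ ω, {ω | A ω ≠ 0}.indicator (fun _ ↦ 2 * (K : ℝ≥0∞)) ω ∂μ := by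
        rw [← lintegral_add_left' hNA]
        exact lintegral_congr hpointwise
      _ = 2 * (K * μ {ω | A ω ≠ 0}) := by
        rw [lintegral_indicator_const₀ hE, mul_assoc]
  exact (ENNReal.mul_right_inj two_ne_zero ENNReal.ofNat_ne_top).1 htwice

theorem palindromic_random_cosine_expected_zeros_general
    {Ω : Type*} [MeasurableSpace Ω] {μ : Measure Ω} {K : ℕ} {A : Ω → Fin (K + 1) → ℝ}
    (hpal : IdentDistrib A (fun ω k ↦ A ω k.rev) μ μ) :
    K * μ {ω | A ω ≠ 0} ≤
      ∫⁻ ω in {ω | A ω ≠ 0}, Zcount (fun x ↦ ∑ k, A ω k * cos ((k : ℕ) * x)) ∂μ := by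
  have hE : NullMeasurableSet {ω | A ω ≠ 0} μ :=
    hpal.aemeasurable_fst.nullMeasurable (measurableSet_singleton 0).compl
  rw [← lintegral_weightedRootCount_coeffPoly hpal, ← lintegral_indicator₀ hE]
  refine lintegral_mono fun ω ↦ ?_
  by_cases hω : A ω = 0
  · simp [hω, coeffPoly, ← Pi.zero_def]
  · rw [indicator_of_mem (by exact hω)]
    exact weightedRootCount_coeffPoly_le_Zcount hω

theorem palindromic_random_cosine_expected_zeros
    {Ω : Type*} [MeasurableSpace Ω] (μ : Measure Ω) [IsProbabilityMeasure μ]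
    (K : ℕ) (hK : 1 ≤ K) (a : Fin (K + 1) → Ω → ℝ)
    (hmeas : ∀ k, Measurable (a k))
    (hindep : iIndepFun a μ)
    (hpal : Measure.map (fun ω (k : Fin (K + 1)) => a k ω) μ =
            Measure.map (fun ω (k : Fin (K + 1)) => a (Fin.rev k) ω) μ)
    (hE : 0 < μ {ω | ∃ k, a k ω ≠ 0}) :
    (K : ℝ≥0∞) * μ {ω | ∃ k, a k ω ≠ 0} ≤
      ∫⁻ ω in {ω | ∃ k, a k ω ≠ 0},
        Zcount (fun x => ∑ k : Fin (K + 1), a k ω * Real.cos ((k : ℕ) * x)) ∂μ := by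
  simpa only [Function.ne_iff, Pi.zero_apply] using palindromic_random_cosine_expected_zeros_general
    (A := fun ω k ↦ a k ω) ⟨by fun_prop, by fun_prop, hpal⟩
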